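/- Let n ≥ 2 be an integer and let G be the grid P_n □ P_2. If j is an integer such that j ≠ 1 and ⌊n/2⌋ ≤ j ≤ n−1, then 2j ∈ S_SC(G). -/

import Mathlib

/-!  Common definitions: oriented graphs, geodesic convexity, convexity number,
strong convexity spectrum, and grid graphs. -/

variable {V : Type*}

/-- A directed walk of length `k` from `u` to `v` along the arc relation `A`,
encoded by the function `f` listing its vertices. -/
def IsDirWalk (A : V → V → Prop) (k : ℕ) (f : ℕ → V) (u v : V) : Prop :=
  f 0 = u ∧ f k = v ∧ ∀ i, i < k → A (f i) (f (i + 1))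

/-- There is a directed walk from `u` to `v`. -/
def DirReachable (A : V → V → Prop) (u v : V) : Prop :=
  ∃ k f, IsDirWalk A k f u v

/-- A digraph (given by its arc relation) is strongly connected. -/
def StrongConnected (A : V → V → Prop) : Prop :=
  ∀ u v : V, DirReachable A u v

/-- A `uv`-geodesic: a directed walk from `u` to `v` of minimum possible length
(such a walk is automatically a directed path). -/
def IsGeodesic (A : V → V → Prop) (k : ℕ) (f : ℕ → V) (u v : V) : Prop :=
  IsDirWalk A k f u v ∧ ∀ k' f', IsDirWalk A k' f' u v → k ≤ k'

/-- A nonempty vertex set `C` is convex if every vertex lying on a geodesic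
between two vertices of `C` (in either direction) belongs to `C`. -/
def DConvex (A : V → V → Prop) (C : Set V) : Prop :=
  C.Nonempty ∧ ∀ u ∈ C, ∀ v ∈ C, ∀ k f, IsGeodesic A k f u v → ∀ i ≤ k, f i ∈ C

/-- `A` is an orientation of the simple graph `G`: every arc is along an edge,
every edge gets an arc, and no edge gets both directions. -/
def IsOrientation (G : SimpleGraph V) (A : V → V → Prop) : Prop :=
  (∀ x y, A x y → G.Adj x y) ∧ (∀ x y, G.Adj x y → A x y ∨ A y x) ∧
    (∀ x y, A x y → ¬ A y x)

/-- The convexity number of a digraph: the maximum cardinality of a proper convex set. -/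
noncomputable def convexityNumber [Fintype V] (A : V → V → Prop) : ℕ :=
  sSup {k | ∃ C : Set V, DConvex A C ∧ C ≠ Set.univ ∧ C.ncard = k}

/-- The strong convexity spectrum of a graph: the set of convexity numbers of
its strongly connected orientations. -/
def strongConvexitySpectrum [Fintype V] (G : SimpleGraph V) : Set ℕ :=
  {k | ∃ A : V → V → Prop, IsOrientation G A ∧ StrongConnected A ∧ convexityNumber A = k}

/-- The grid graph `P_n □ P_m`. -/
def gridGraph (n m : ℕ) : SimpleGraph (Fin n × Fin m) :=
  (SimpleGraph.pathGraph n).boxProd (SimpleGraph.pathGraph m)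

/-!
Orient the ladder `P_n □ P_2` so that in every square the two rails run in opposite directions.
A convex set meeting both sides of the cut between two consecutive columns then contains both of
these columns, a full column spreads through every square that is a directed 4-cycle, and the first
`j` columns are convex as soon as the rung of the last one is a shortcut from the only exit to the
only entrance of the block.

If `n ≤ 2 * j`, make all squares cyclic except the one after the first `j` columns: a set with more
than `2 * j` vertices is contained in neither side of this cut, so a convex one is everything. If
`n = 2 * j + 1`, the middle column is left over. Its rung and the two next to it are made parallel,
and the rails around it are symmetric, so that its two vertices are joined by two geodesics of
length 5, which change rows two columns to its left and two columns to its right; hence the convex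
hull of the middle column is everything, too.
-/

section Walks

variable {A : V → V → Prop} {k l : ℕ} {f g : ℕ → V} {u v w : V}

theorem IsDirWalk.append (hf : IsDirWalk A k f u v) (hg : IsDirWalk A l g v w) :
    IsDirWalk A (k + l) (fun i => if i ≤ k then f i else g (i - k)) u w := by
  obtain ⟨hf₀, hfk, hf⟩ := hf
  obtain ⟨hg₀, hgl, hg⟩ := hg
  refine ⟨by simp [hf₀], ?_, fun i hi => ?_⟩
  · rcases l.eq_zero_or_pos with rfl | hl
    · simp [hfk, ← hgl, hg₀]
    · simp [hgl, hl.ne']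
  · rcases lt_trichotomy i k with hik | rfl | hik
    · simpa [hik.le, Nat.succ_le_of_lt hik] using hf i hik
    · simpa [hfk, ← hg₀] using hg 0 (by omega)
    · simpa [hik.not_ge, show ¬ i + 1 ≤ k by omega, Nat.sub_add_comm hik.le] using
        hg (i - k) (by omega)

theorem isDirWalk_one (h : A u v) : IsDirWalk A 1 (fun i => if i = 0 then u else v) u v :=
  ⟨rfl, rfl, fun i hi => by simpa [Nat.lt_one_iff.1 hi] using h⟩

theorem dirReachable_of_reflTransGen (h : Relation.ReflTransGen A u v) : DirReachable A u v := by
  induction h with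
  | refl => exact ⟨0, fun _ => u, rfl, rfl, by simp⟩
  | tail _ harc ih =>
    obtain ⟨k, f, hf⟩ := ih
    exact ⟨_, _, hf.append (isDirWalk_one harc)⟩

theorem IsDirWalk.le_add_length {φ : V → ℕ} (hφ : ∀ x y, A x y → φ x ≤ φ y + 1)
    (hf : IsDirWalk A k f u v) : φ u ≤ φ v + k := by
  have hstep : ∀ i ≤ k, φ u ≤ φ (f i) + i := by
    intro i hi
    induction i with
    | zero => rw [hf.1, add_zero]
    | succ i ih =>
      have := hφ _ _ (hf.2.2 i hi)
      have := ih (by omega)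
      omega
  simpa [hf.2.1] using hstep k le_rfl

theorem StrongConnected.exists_isGeodesic (hA : StrongConnected A) (u v : V) :
    ∃ k f, IsGeodesic A k f u v := by
  classical
  have hwalk : ∃ k f, IsDirWalk A k f u v := hA u v
  obtain ⟨f, hf⟩ := Nat.find_spec hwalk
  exact ⟨_, f, hf, fun k' f' hf' => Nat.find_min' hwalk ⟨f', hf'⟩⟩

theorem IsGeodesic.le_succ_of_arc (hf : IsGeodesic A k f u v) {p q : ℕ} (hp : p ≤ k) (hq : q ≤ k)
    (harc : A (f p) (f q)) : q ≤ p + 1 := by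
  obtain ⟨⟨hf₀, hfk, hstep⟩, hmin⟩ := hf
  have hinit : IsDirWalk A p f u (f p) := ⟨hf₀, rfl, fun i hi => hstep i (by omega)⟩
  have htail : IsDirWalk A (k - q) (fun i => f (q + i)) (f q) v :=
    ⟨rfl, by simp only [Nat.add_sub_cancel' hq, hfk], fun i hi => hstep (q + i) (by omega)⟩
  have := hmin _ _ ((hinit.append (isDirWalk_one harc)).append htail)
  omega

theorem exists_mem_succ_notMem {S : Set V} {a b : ℕ} (hab : a ≤ b) (ha : f a ∈ S) (hb : f b ∉ S) :
    ∃ i, a ≤ i ∧ i < b ∧ f i ∈ S ∧ f (i + 1) ∉ S := by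
  induction b, hab using Nat.le_induction with
  | base => exact absurd ha hb
  | succ b hab ih =>
    by_cases hfb : f b ∈ S
    · exact ⟨b, hab, b.lt_succ_self, hfb, hb⟩
    · obtain ⟨i, hai, hib, hi⟩ := ih hfb
      exact ⟨i, hai, by omega, hi⟩

end Walks

section Convexity

variable {A : V → V → Prop} {C : Set V}

theorem DConvex.exists_arc_mem_notMem (hC : DConvex A C) (hA : StrongConnected A) {S : Set V}
    {x y : V} (hx : x ∈ C) (hxS : x ∈ S) (hy : y ∈ C) (hyS : y ∉ S) :
    ∃ p ∈ C, ∃ q ∈ C, p ∈ S ∧ q ∉ S ∧ A p q := by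
  obtain ⟨k, f, hf⟩ := hA.exists_isGeodesic x y
  obtain ⟨i, -, hik, hi, hi'⟩ :=
    exists_mem_succ_notMem (f := f) (S := S) k.zero_le (by rwa [hf.1.1]) (by rwa [hf.1.2.1])
  have hmem := hC.2 x hx y hy k f hf
  exact ⟨f i, hmem i hik.le, f (i + 1), hmem (i + 1) hik, hi, hi', hf.1.2.2 i hik⟩

theorem dConvex_of_shortcut (hne : C.Nonempty)
    (hshort : ∀ p ∈ C, ∀ p' ∉ C, ∀ q' ∉ C, ∀ q ∈ C, A p p' → A q' q → A p q) : DConvex A C := by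
  refine ⟨hne, fun u hu v hv k f hf i hik => by_contra fun hi => ?_⟩
  obtain ⟨p, -, hpi, hp, hp'⟩ := exists_mem_succ_notMem i.zero_le (by rwa [hf.1.1]) hi
  obtain ⟨q, hiq, hqk, hq', hq⟩ :=
    exists_mem_succ_notMem (S := Cᶜ) hik hi (not_not.2 (by rwa [hf.1.2.1]))
  have harc : A (f p) (f (q + 1)) := hshort _ hp _ hp' _ hq' _ (not_not.1 hq)
    (hf.1.2.2 p (by omega)) (hf.1.2.2 q hqk)
  have := hf.le_succ_of_arc (by omega) hqk harc
  omega

-- A directed path along which a 1-Lipschitz potential drops by 1 at every arc is a geodesic.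
theorem DConvex.mem_of_isChain (hC : DConvex A C) {φ : V → ℕ}
    (hφ : ∀ x y, A x y → φ x ≤ φ y + 1) {l : List V} (hne : l ≠ []) (hl : l.IsChain A)
    (hlen : φ (l.getLast hne) + l.length ≤ φ (l.head hne) + 1)
    (hhead : l.head hne ∈ C) (hlast : l.getLast hne ∈ C) {x : V} (hx : x ∈ l) : x ∈ C := by
  have hpos : 0 < l.length := List.length_pos_iff.2 hne
  let f : ℕ → V := fun i => l.getD i x
  have hfget : ∀ i (hi : i < l.length), f i = l[i] := fun i hi => List.getD_eq_getElem l x hi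
  have hwalk : IsDirWalk A (l.length - 1) f (l.head hne) (l.getLast hne) := by
    refine ⟨?_, ?_, fun i hi => ?_⟩
    · rw [hfget 0 hpos, List.head_eq_getElem]
    · rw [hfget _ (by omega), List.getLast_eq_getElem]
    · rw [hfget i (by omega), hfget (i + 1) (by omega)]
      exact List.isChain_iff_getElem.1 hl i (by omega)
  have hgeo : IsGeodesic A (l.length - 1) f (l.head hne) (l.getLast hne) := by
    refine ⟨hwalk, fun k g hg => ?_⟩
    have := hg.le_add_length hφ
    omega
  obtain ⟨i, hi, rfl⟩ := List.getElem_of_mem hx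
  rw [← hfget i hi]
  exact hC.2 _ hhead _ hlast _ _ hgeo i (by omega)

theorem convexityNumber_eq_ncard [Fintype V] (hC : DConvex A C) (hne : C ≠ Set.univ)
    (hmax : ∀ D, DConvex A D → C.ncard < D.ncard → D = Set.univ) :
    convexityNumber A = C.ncard := by
  refine IsGreatest.csSup_eq ⟨⟨C, hC, hne, rfl⟩, ?_⟩
  rintro _ ⟨D, hD, hDne, rfl⟩
  exact not_lt.1 fun hlt => hDne (hmax D hD hlt)

end Convexity

/-- The orientation of the ladder `P_n □ P_2` in which the rung in column `i` leaves row `rung i`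
and, between the columns `i` and `i + 1`, row `rail i` runs to the right and the other row to the
left. -/
inductive LadderArc {n : ℕ} (rung rail : ℕ → Fin 2) : Fin n × Fin 2 → Fin n × Fin 2 → Prop
  | cross {i : ℕ} {a b : Fin 2} (hi : i < n) (h : rung i = a) (hab : a ≠ b) :
      LadderArc rung rail (⟨i, hi⟩, a) (⟨i, hi⟩, b)
  | right {i : ℕ} {a : Fin 2} (hi : i + 1 < n) (h : rail i = a) :
      LadderArc rung rail (⟨i, by omega⟩, a) (⟨i + 1, hi⟩, a)
  | left {i : ℕ} {a : Fin 2} (hi : i + 1 < n) (h : rail i ≠ a) :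
      LadderArc rung rail (⟨i + 1, hi⟩, a) (⟨i, by omega⟩, a)

/-- The square on the columns `i` and `i + 1` is a directed 4-cycle. -/
def CyclicSquare (rung rail : ℕ → Fin 2) (i : ℕ) : Prop :=
  rung i ≠ rail i ∧ rung (i + 1) = rail i

/-- The set `C` contains both vertices of column `i`; this holds vacuously if `n ≤ i`. -/
def ContainsColumn {n : ℕ} (C : Set (Fin n × Fin 2)) (i : ℕ) : Prop :=
  ∀ (hi : i < n) (a : Fin 2), (⟨i, hi⟩, a) ∈ C

/-- The two vertices of column `i` reach each other; this holds vacuously if `n ≤ i`. -/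
def StrongColumn (n : ℕ) (rung rail : ℕ → Fin 2) (i : ℕ) : Prop :=
  ∀ (hi : i < n) (a b : Fin 2),
    Relation.ReflTransGen (LadderArc (n := n) rung rail) (⟨i, hi⟩, a) (⟨i, hi⟩, b)

/-- A potential bounding from below the distance to `(m, a)` when all rungs in columns at distance
less than `t` from column `m` leave row `a`: a vertex of the other row has to move to distance `t`
before it can change rows. -/
def detourPotential {n : ℕ} (a : Fin 2) (m t : ℕ) (x : Fin n × Fin 2) : ℕ :=
  if x.2 = a then min t (Nat.dist x.1 m) else 2 * t + 1 - min t (Nat.dist x.1 m)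

section Ladder

variable {n : ℕ} {rung rail : ℕ → Fin 2}

theorem eq_or_eq_of_ne {a b : Fin 2} (hab : a ≠ b) (c : Fin 2) : c = a ∨ c = b := by
  omega

theorem isOrientation_ladderArc : IsOrientation (gridGraph n 2) (LadderArc rung rail) := by
  refine ⟨?_, ?_, ?_⟩
  · rintro _ _ (⟨-, -, hab⟩ | - | -)
    · simpa [gridGraph, SimpleGraph.boxProd_adj, SimpleGraph.pathGraph_adj] using by omega
    all_goals simp [gridGraph, SimpleGraph.boxProd_adj, SimpleGraph.pathGraph_adj]
  · have hrail (i : ℕ) (hi : i + 1 < n) (a : Fin 2) :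
        LadderArc rung rail (⟨i, by omega⟩, a) (⟨i + 1, hi⟩, a) ∨
          LadderArc rung rail (⟨i + 1, hi⟩, a) (⟨i, by omega⟩, a) :=
      (em (rail i = a)).imp (.right hi) (.left hi)
    rintro ⟨⟨i, hi⟩, a⟩ ⟨⟨i', hi'⟩, b⟩ hadj
    simp only [gridGraph, SimpleGraph.boxProd_adj, SimpleGraph.pathGraph_adj, Fin.mk.injEq] at hadj
    rcases hadj with ⟨rfl | rfl, rfl⟩ | ⟨hab, rfl⟩
    · exact hrail i hi' a
    · exact (hrail i' hi a).symm
    · have hne : a ≠ b := by omega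
      exact (eq_or_eq_of_ne hne (rung i)).imp (.cross hi · hne) (.cross hi · hne.symm)
  · rintro _ _ (_ | _ | _) hrev <;> cases hrev <;> simp_all

theorem LadderArc.eq_of_le_of_lt {i j c : ℕ} {hi : i < n} {hj : j < n} {a b : Fin 2}
    (h : LadderArc rung rail (⟨i, hi⟩, a) (⟨j, hj⟩, b)) (hic : i ≤ c) (hcj : c < j) :
    i = c ∧ j = c + 1 ∧ rail c = a ∧ a = b := by
  cases h with
  | right _ h =>
    obtain rfl : i = c := by omega
    exact ⟨rfl, rfl, h, rfl⟩
  | _ => omega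

theorem LadderArc.eq_of_lt_of_le {i j c : ℕ} {hi : i < n} {hj : j < n} {a b : Fin 2}
    (h : LadderArc rung rail (⟨i, hi⟩, a) (⟨j, hj⟩, b)) (hci : c < i) (hjc : j ≤ c) :
    i = c + 1 ∧ j = c ∧ rail c ≠ a ∧ a = b := by
  cases h with
  | left _ h =>
    obtain rfl : j = c := by omega
    exact ⟨rfl, rfl, h, rfl⟩
  | _ => omega

theorem ncard_preimage_fst (s : Finset (Fin n)) :
    (Prod.fst ⁻¹' (s : Set (Fin n)) : Set (Fin n × Fin 2)).ncard = 2 * s.card := by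
  rw [← Set.prod_univ, Set.ncard_prod, Set.ncard_coe_finset, Set.ncard_univ, Nat.card_fin, mul_comm]

theorem exists_mem_fst_notMem {C : Set (Fin n × Fin 2)} {s : Finset (Fin n)}
    (h : 2 * s.card < C.ncard) : ∃ x ∈ C, x.1 ∉ s := by
  by_contra! hsub
  have := Set.ncard_le_ncard (t := Prod.fst ⁻¹' (s : Set (Fin n))) hsub
  rw [ncard_preimage_fst] at this
  omega

theorem strongColumn_of_reflTransGen {i : ℕ} {a b : Fin 2} (hab : a ≠ b)
    (h : ∀ hi : i < n, Relation.ReflTransGen (LadderArc rung rail) (⟨i, hi⟩, a) (⟨i, hi⟩, b))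
    (h' : ∀ hi : i < n, Relation.ReflTransGen (LadderArc rung rail) (⟨i, hi⟩, b) (⟨i, hi⟩, a)) :
    StrongColumn n rung rail i := by
  intro hi p q
  rcases eq_or_eq_of_ne hab p with rfl | rfl <;> rcases eq_or_eq_of_ne hab q with rfl | rfl
  exacts [.refl, h hi, h' hi, .refl]

theorem CyclicSquare.strongColumn {i : ℕ} (h : CyclicSquare rung rail i) (hi : i + 1 < n) :
    StrongColumn n rung rail i := by
  refine strongColumn_of_reflTransGen h.1 (fun hi' => .single (.cross hi' rfl h.1)) fun _ => ?_
  exact ((Relation.ReflTransGen.single (.right hi rfl)).tail (.cross hi h.2 h.1.symm)).tail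
    (.left hi h.1.symm)

-- The new column is an ear attached to the old one.
theorem StrongColumn.succ {i : ℕ} (h : StrongColumn n rung rail i)
    (hrung : rung (i + 1) = rail i) : StrongColumn n rung rail (i + 1) := by
  obtain ⟨b, hb⟩ := exists_ne (rail i)
  refine strongColumn_of_reflTransGen hb.symm (fun hi => .single (.cross hi hrung hb.symm))
    fun hi => ?_
  exact ((h _ b (rail i)).head (.left hi hb.symm)).tail (.right hi rfl)

theorem StrongColumn.of_le {i j : ℕ} (h : StrongColumn n rung rail i) (hij : i ≤ j)
    (hrung : ∀ k, i ≤ k → k < j → rung (k + 1) = rail k) : StrongColumn n rung rail j := by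
  induction j, hij using Nat.le_induction with
  | base => exact h
  | succ j hij ih =>
    exact (ih fun k hik hkj => hrung k hik (by omega)).succ (hrung j hij j.lt_succ_self)

theorem reflTransGen_columns_of_le (h : ∀ i, StrongColumn n rung rail i) {i j : ℕ} (hij : i ≤ j)
    (hj : j < n) (a b : Fin 2) :
    Relation.ReflTransGen (LadderArc rung rail) (⟨i, by omega⟩, a) (⟨j, hj⟩, b) ∧
      Relation.ReflTransGen (LadderArc rung rail) (⟨j, hj⟩, b) (⟨i, by omega⟩, a) := by
  induction j, hij using Nat.le_induction generalizing b with
  | base => exact ⟨h i hj a b, h i hj b a⟩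
  | succ j hij ih =>
    obtain ⟨c, hc⟩ := exists_ne (rail j)
    exact ⟨((ih (by omega) (rail j)).1.tail (.right hj rfl)).trans (h _ hj _ _),
      (h _ hj _ _).trans ((ih (by omega) c).2.head (.left hj hc.symm))⟩

theorem strongConnected_of_strongColumn (h : ∀ i, StrongColumn n rung rail i) :
    StrongConnected (LadderArc (n := n) rung rail) := by
  rintro ⟨⟨i, hi⟩, a⟩ ⟨⟨j, hj⟩, b⟩
  refine dirReachable_of_reflTransGen ?_
  rcases le_total i j with hij | hji
  · exact (reflTransGen_columns_of_le h hij hj a b).1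
  · exact (reflTransGen_columns_of_le h hji hi b a).2

theorem dConvex_preimage_fst_Iic {c : ℕ} (hc : c < n) (hcut : rung c = rail c) :
    DConvex (LadderArc rung rail) (Prod.fst ⁻¹' (Finset.Iic (⟨c, hc⟩ : Fin n) : Set (Fin n))) := by
  refine dConvex_of_shortcut ⟨(⟨c, hc⟩, 0), by simp⟩ ?_
  simp only [Finset.coe_Iic, Set.mem_preimage, Set.mem_Iic, Fin.le_def, not_le]
  rintro ⟨⟨_, _⟩, _⟩ hp ⟨⟨_, _⟩, _⟩ hp' ⟨⟨_, _⟩, _⟩ hq' ⟨⟨_, _⟩, _⟩ hq hexit hentry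
  obtain ⟨rfl, -, rfl, -⟩ := hexit.eq_of_le_of_lt hp hp'
  obtain ⟨-, rfl, hne, rfl⟩ := hentry.eq_of_lt_of_le hq' hq
  exact .cross hc hcut hne

section Convex

variable {C : Set (Fin n × Fin 2)} {c i j m t : ℕ} {a b : Fin 2}

theorem containsColumn_of_mem (hi : i < n) (hab : a ≠ b) (ha : (⟨i, hi⟩, a) ∈ C)
    (hb : (⟨i, hi⟩, b) ∈ C) : ContainsColumn C i := by
  intro _ p
  rcases eq_or_eq_of_ne hab p with rfl | rfl
  exacts [ha, hb]

theorem eq_univ_of_containsColumn (h : ∀ i, ContainsColumn C i) : C = Set.univ :=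
  Set.eq_univ_of_forall fun x => h x.1 x.1.2 x.2

theorem containsColumn_of_mem_of_mem (hC : DConvex (LadderArc rung rail) C)
    (hS : StrongConnected (LadderArc (n := n) rung rail)) {x y : Fin n × Fin 2} (hx : x ∈ C)
    (hy : y ∈ C) (hxc : (x.1 : ℕ) ≤ c) (hcy : c < y.1) :
    ContainsColumn C c ∧ ContainsColumn C (c + 1) := by
  obtain ⟨⟨⟨_, _⟩, _⟩, hp, ⟨⟨_, _⟩, _⟩, hq, hpc, hqc, hpq⟩ :=
    hC.exists_arc_mem_notMem hS (S := {z | (z.1 : ℕ) ≤ c}) hx hxc hy (not_le.2 hcy)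
  obtain ⟨⟨⟨_, _⟩, _⟩, hp', ⟨⟨_, _⟩, _⟩, hq', hpc', hqc', hpq'⟩ :=
    hC.exists_arc_mem_notMem hS (S := {z | c < (z.1 : ℕ)}) hy hcy hx (not_lt.2 hxc)
  obtain ⟨rfl, rfl, rfl, rfl⟩ := hpq.eq_of_le_of_lt hpc (not_le.1 hqc)
  obtain ⟨rfl, rfl, hne, rfl⟩ := hpq'.eq_of_lt_of_le hpc' (not_lt.1 hqc')
  exact ⟨containsColumn_of_mem _ hne hp hq', containsColumn_of_mem _ hne hq hp'⟩

theorem detourPotential_le_succ (hrung : ∀ i, Nat.dist i m < t → rung i = a) (x y : Fin n × Fin 2)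
    (h : LadderArc rung rail x y) :
    detourPotential a m t x ≤ detourPotential a m t y + 1 := by
  rcases h with @⟨i, p, q, hi, hp, hpq⟩ | _ | _
  · have hturn : p ≠ a → t ≤ Nat.dist i m := fun hpa => not_lt.1 fun hlt =>
      hpa (hp.symm.trans (hrung i hlt))
    simp only [detourPotential]
    split_ifs <;> omega
  all_goals
    simp only [detourPotential, Nat.dist]
    split_ifs <;> omega

theorem ContainsColumn.mem_of_isChain (hC : DConvex (LadderArc rung rail) C)
    (hm : ContainsColumn C m) (hmn : m < n) (hab : a ≠ b)
    (hrung : ∀ i, Nat.dist i m < t → rung i = a) {l : List (Fin n × Fin 2)}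
    (hlen : l.length = 2 * t)
    (hl : List.IsChain (LadderArc rung rail)
      (((⟨m, hmn⟩ : Fin n), b) :: (l ++ [((⟨m, hmn⟩ : Fin n), a)])))
    {x : Fin n × Fin 2} (hx : x ∈ l) : x ∈ C := by
  refine hC.mem_of_isChain (detourPotential_le_succ hrung) (by simp) hl ?_ ?_ ?_ (by simp [hx])
  · simp [detourPotential, hab.symm, hlen]
  all_goals simpa using hm hmn _

theorem CyclicSquare.containsColumn_iff (h : CyclicSquare rung rail i) (hi : i + 1 < n)
    (hC : DConvex (LadderArc rung rail) C) : ContainsColumn C i ↔ ContainsColumn C (i + 1) := by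
  have hright := LadderArc.right (rung := rung) (rail := rail) hi rfl
  have hcross' := LadderArc.cross (rail := rail) hi h.2 h.1.symm
  have hleft := LadderArc.left (rung := rung) hi h.1.symm
  have hcross := LadderArc.cross (rung := rung) (rail := rail) (show i < n by omega) rfl h.1
  have hrung (k : ℕ) : ∀ i, Nat.dist i k < 1 → rung i = rung k := fun i hik => by
    rw [Nat.eq_of_dist_eq_zero (Nat.lt_one_iff.1 hik)]
  constructor <;> intro hcol
  · have hmem := fun x => hcol.mem_of_isChain hC (by omega) h.1 (hrung i)
      (l := [(⟨i + 1, hi⟩, rail i), (⟨i + 1, hi⟩, rung i)]) rfl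
      (by simp [hright, hcross', hleft]) (x := x)
    exact containsColumn_of_mem hi h.1.symm (hmem _ (by simp)) (hmem _ (by simp))
  · have hmem := fun x => hcol.mem_of_isChain hC hi h.1.symm (h.2 ▸ hrung (i + 1))
      (l := [(⟨i, by omega⟩, rung i), (⟨i, by omega⟩, rail i)]) rfl
      (by simp [hright, hcross, hleft]) (x := x)
    exact containsColumn_of_mem (by omega) h.1 (hmem _ (by simp)) (hmem _ (by simp))

theorem containsColumn_iff_of_cyclicSquare (hC : DConvex (LadderArc rung rail) C) (hij : i ≤ j)
    (hj : j < n) (h : ∀ k, i ≤ k → k < j → CyclicSquare rung rail k) :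
    ContainsColumn C i ↔ ContainsColumn C j := by
  induction j, hij using Nat.le_induction with
  | base => rfl
  | succ j hij ih =>
    exact (ih (by omega) fun k hik hkj => h k hik (by omega)).trans
      ((h j hij j.lt_succ_self).containsColumn_iff hj hC)

theorem ContainsColumn.neighbors_of_parallel_rungs (hC : DConvex (LadderArc rung rail) C)
    (hin : i + 4 < n) (hrung₁ : rung (i + 1) = a) (hrung₂ : rung (i + 2) = a)
    (hrung₃ : rung (i + 3) = a) (hrail₁ : rail (i + 1) = a) (hrail₂ : rail (i + 2) ≠ a)
    (hleft : CyclicSquare rung rail i) (hright : CyclicSquare rung rail (i + 3))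
    (hcol : ContainsColumn C (i + 2)) : ContainsColumn C (i + 1) ∧ ContainsColumn C (i + 3) := by
  obtain ⟨b, hba⟩ := exists_ne a
  have hrung : ∀ k, Nat.dist k (i + 2) < 2 → rung k = a := by
    intro k hk
    obtain rfl | rfl | rfl : k = i + 1 ∨ k = i + 2 ∨ k = i + 3 := by
      simp only [Nat.dist] at hk
      omega
    all_goals assumption
  have hrail₀ : rail i = a := hleft.2.symm.trans hrung₁
  have hrung₀ : rung i = b := (eq_or_eq_of_ne hba _).resolve_right (hrail₀ ▸ hleft.1)
  have hrail₂' : rail (i + 2) = b := (eq_or_eq_of_ne hba _).resolve_right hrail₂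
  have hrail₃ : rail (i + 3) = b :=
    (eq_or_eq_of_ne hba _).resolve_right (hrung₃ ▸ hright.1.symm)
  have hrung₄ : rung (i + 4) = b := hright.2.trans hrail₃
  constructor
  · have hmem := fun x => hcol.mem_of_isChain hC (by omega) hba.symm hrung
      (l := [(⟨i + 1, by omega⟩, b), (⟨i, by omega⟩, b), (⟨i, by omega⟩, a),
        (⟨i + 1, by omega⟩, a)])
      rfl (by
        simpa using ⟨.left _ (hrail₁ ▸ hba.symm), .left _ (hrail₀ ▸ hba.symm), .cross _ hrung₀ hba,
          .right _ hrail₀, .right _ hrail₁⟩) (x := x)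
    exact containsColumn_of_mem (by omega) hba (hmem _ (by simp)) (hmem _ (by simp))
  · have hmem := fun x => hcol.mem_of_isChain hC (by omega) hba.symm hrung
      (l := [(⟨i + 3, by omega⟩, b), (⟨i + 4, hin⟩, b), (⟨i + 4, hin⟩, a),
        (⟨i + 3, by omega⟩, a)])
      rfl (by
        simpa using ⟨.right _ hrail₂', .right _ hrail₃, .cross _ hrung₄ hba,
          .left _ (hrail₃ ▸ hba), .left _ hrail₂⟩) (x := x)
    exact containsColumn_of_mem (by omega) hba (hmem _ (by simp)) (hmem _ (by simp))

end Convex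

theorem convexityNumber_ladderArc_eq {c : ℕ} (hc : c + 1 < n) (hcut : rung c = rail c)
    (hmax : ∀ C, DConvex (LadderArc (n := n) rung rail) C → 2 * (c + 1) < C.ncard →
      C = Set.univ) :
    convexityNumber (LadderArc (n := n) rung rail) = 2 * (c + 1) := by
  have hcard := ncard_preimage_fst (Finset.Iic (⟨c, by omega⟩ : Fin n))
  rw [Fin.card_Iic] at hcard
  rw [← hcard] at hmax ⊢
  refine convexityNumber_eq_ncard (dConvex_preimage_fst_Iic _ hcut) ?_ hmax
  exact (Set.ne_univ_iff_exists_notMem _).2 ⟨(⟨c + 1, hc⟩, 0), by simp⟩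

theorem convexityNumber_ladderArc_of_le {c : ℕ} (hc : c + 1 < n) (hn : n ≤ 2 * (c + 1))
    (hS : StrongConnected (LadderArc (n := n) rung rail)) (hcut : rung c = rail c)
    (hcyc : ∀ i ≠ c, CyclicSquare rung rail i) :
    convexityNumber (LadderArc (n := n) rung rail) = 2 * (c + 1) := by
  refine convexityNumber_ladderArc_eq hc hcut fun C hC hcard => ?_
  obtain ⟨y, hy, hcy⟩ := exists_mem_fst_notMem (C := C) (s := Finset.Iic ⟨c, by omega⟩)
    (by simpa using hcard)
  obtain ⟨x, hx, hxc⟩ := exists_mem_fst_notMem (C := C) (s := Finset.Ioi ⟨c, by omega⟩)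
    (by simp only [Fin.card_Ioi]; omega)
  simp only [Finset.mem_Iic, Finset.mem_Ioi, Fin.le_def, Fin.lt_def, not_le, not_lt] at hcy hxc
  obtain ⟨hcol, hcol'⟩ := containsColumn_of_mem_of_mem hC hS hx hy hxc hcy
  refine eq_univ_of_containsColumn fun i hi => ?_
  rcases le_or_gt i c with hic | hci
  · exact (containsColumn_iff_of_cyclicSquare hC hic (by omega)
      fun k _ hkc => hcyc k hkc.ne).2 hcol hi
  · exact (containsColumn_iff_of_cyclicSquare hC hci hi
      fun k hck _ => hcyc k (by omega)).1 hcol' hi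

theorem convexityNumber_ladderArc_of_eq {c : ℕ} (hn : n = 2 * (c + 2) + 1)
    (hS : StrongConnected (LadderArc (n := n) rung rail)) (hcut : rung (c + 1) = rail (c + 1))
    (hrung₂ : rung (c + 2) = rail (c + 1)) (hrung₃ : rung (c + 3) = rail (c + 1))
    (hrail₂ : rail (c + 2) ≠ rail (c + 1))
    (hcyc : ∀ i, i ≤ c ∨ c + 3 ≤ i → CyclicSquare rung rail i) :
    convexityNumber (LadderArc (n := n) rung rail) = 2 * (c + 2) := by
  refine convexityNumber_ladderArc_eq (c := c + 1) (by omega) hcut fun C hC hcard => ?_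
  obtain ⟨y, hy, hcy⟩ := exists_mem_fst_notMem (C := C) (s := Finset.Iic ⟨c + 1, by omega⟩)
    (by simpa using hcard)
  obtain ⟨x, hx, hxc⟩ := exists_mem_fst_notMem (C := C) (s := Finset.Ioi ⟨c + 2, by omega⟩)
    (by simp only [Fin.card_Ioi]; omega)
  obtain ⟨z, hz, hzc⟩ := exists_mem_fst_notMem (C := C) (s := {⟨c + 2, by omega⟩})
    (by rw [Finset.card_singleton]; omega)
  simp only [Finset.mem_Iic, Finset.mem_Ioi, Finset.mem_singleton, Fin.le_def, Fin.lt_def,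
    Fin.ext_iff, not_le, not_lt] at hcy hxc hzc
  have hmiddle : ContainsColumn C (c + 2) := by
    rcases lt_or_gt_of_ne hzc with hlt | hgt
    · exact (containsColumn_of_mem_of_mem hC hS hz hy (Nat.lt_succ_iff.1 hlt) hcy).2
    · exact (containsColumn_of_mem_of_mem hC hS hx hz hxc hgt).1
  obtain ⟨hleft, hright⟩ := hmiddle.neighbors_of_parallel_rungs hC (by omega) hcut hrung₂ hrung₃ rfl
    hrail₂ (hcyc c (by omega)) (hcyc (c + 3) (by omega))
  refine eq_univ_of_containsColumn fun i hi => ?_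
  rcases lt_trichotomy i (c + 2) with hic | rfl | hci
  · exact (containsColumn_iff_of_cyclicSquare hC (Nat.lt_succ_iff.1 hic) (by omega)
      fun k _ hkc => hcyc k (by omega)).2 hleft hi
  · exact hmiddle hi
  · exact (containsColumn_iff_of_cyclicSquare hC hci hi
      fun k hck _ => hcyc k (by omega)).1 hright hi

end Ladder

theorem two_mul_mem_strongConvexitySpectrum_of_le {n c : ℕ} (hc : 0 < c) (hcn : c + 1 < n)
    (hn : n ≤ 2 * (c + 1)) : 2 * (c + 1) ∈ strongConvexitySpectrum (gridGraph n 2) := by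
  let rung : ℕ → Fin 2 := fun i => Fin.ofNat 2 (if i ≤ c then i else i + 1)
  let rail : ℕ → Fin 2 := fun i => rung (i + 1)
  have hcut : rung c = rail c := by
    simp only [rung, rail, Fin.ext_iff, Fin.val_ofNat]
    split_ifs <;> omega
  have hcyc : ∀ i ≠ c, CyclicSquare rung rail i := by
    refine fun i hi => ⟨?_, rfl⟩
    simp only [rung, rail, ne_eq, Fin.ext_iff, Fin.val_ofNat]
    split_ifs <;> omega
  have hS : StrongConnected (LadderArc (n := n) rung rail) :=
    strongConnected_of_strongColumn fun i =>
      ((hcyc 0 hc.ne).strongColumn (by omega)).of_le i.zero_le fun _ _ _ => rfl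
  exact ⟨_, isOrientation_ladderArc, hS, convexityNumber_ladderArc_of_le hcn hn hS hcut hcyc⟩

theorem two_mul_mem_strongConvexitySpectrum_of_eq (c : ℕ) :
    2 * (c + 2) ∈ strongConvexitySpectrum (gridGraph (2 * (c + 2) + 1) 2) := by
  let rung : ℕ → Fin 2 := fun i => Fin.ofNat 2 (if i = c + 2 then i + 1 else i)
  let rail : ℕ → Fin 2 := fun i => Fin.ofNat 2 (if c < i ∧ i ≤ c + 2 then i else i + 1)
  have hcyc : ∀ i, i ≤ c ∨ c + 3 ≤ i → CyclicSquare rung rail i := by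
    intro i hi
    simp only [CyclicSquare, rung, rail, ne_eq, Fin.ext_iff, Fin.val_ofNat]
    split_ifs <;> omega
  have hear : ∀ i ≠ c + 2, rung (i + 1) = rail i := by
    intro i hi
    simp only [rung, rail, Fin.ext_iff, Fin.val_ofNat]
    split_ifs <;> omega
  have hS : StrongConnected (LadderArc (n := 2 * (c + 2) + 1) rung rail) := by
    refine strongConnected_of_strongColumn fun i => ?_
    rcases le_or_gt i (c + 2) with hic | hci
    · exact ((hcyc 0 (by omega)).strongColumn (by omega)).of_le i.zero_le
        fun k _ hki => hear k (by omega)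
    · exact ((hcyc (c + 3) (by omega)).strongColumn (by omega)).of_le hci
        fun k hck _ => hear k (by omega)
  refine ⟨_, isOrientation_ladderArc, hS, convexityNumber_ladderArc_of_eq rfl hS ?_ ?_ ?_ ?_ hcyc⟩
  all_goals
    simp only [rung, rail, ne_eq, Fin.ext_iff, Fin.val_ofNat]
    split_ifs <;> omega

/-- Realizable values `2j` in the strong convexity spectrum of `P_n □ P_2`. -/
theorem two_j_mem_strongConvexitySpectrum_grid_n2 (n : ℕ) (hn : 2 ≤ n)
    (j : ℕ) (hj1 : j ≠ 1) (hjl : n / 2 ≤ j) (hju : j ≤ n - 1) :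
    2 * j ∈ strongConvexitySpectrum (gridGraph n 2) := by
  obtain ⟨c, rfl⟩ : ∃ c, j = c + 2 := ⟨j - 2, by omega⟩
  rcases (show n ≤ 2 * (c + 2) ∨ n = 2 * (c + 2) + 1 by omega) with hle | rfl
  · exact two_mul_mem_strongConvexitySpectrum_of_le c.succ_pos (by omega) hle
  · exact two_mul_mem_strongConvexitySpectrum_of_eq c
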